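/- arXiv:1904.00190 — 2 statements merged into one kernel-verified Lean document; each statement's English description precedes it below -/
import Mathlib

section
/- For integers ℓ₁, ℓ₂ ≥ 1 and D(s₁,s₂) = ∫_{0≤t₁≤t₂≤∞} θ⁰(t₁)t₁^{s₁−1}θ⁰(t₂)t₂^{s₂−1}dt₁dt₂ with θ⁰(t) = 2∑_{n≥1}e^{−πn²t²}, one has D(2ℓ₁, 2ℓ₂) = ((ℓ₁−1)!(ℓ₂−1)!/π^{ℓ₁+ℓ₂}) · ∑_{k=0}^{ℓ₂−1} C(ℓ₁+k−1, k) · Q(ℓ₁+k, ℓ₂−k), where Q(k₁,k₂) = ∑_{m,n≥1} 1/((m²+n²)^{k₁}·n^{2k₂}). -/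
/-!
On `(0, ∞)` the function `θ⁰(t) t^{2ℓ-1}` is the sum over `n ≥ 1` of `2 t^{2ℓ-1} e^{-πn²t²}`. Since
`∑ n^{-2ℓ}` converges, the integrals of these nonnegative terms are summable, and `D(2ℓ₁, 2ℓ₂)` may
be expanded into a double series of triangle integrals of such terms. In each of these, integrating
first over the larger variable `t₂` gives an upper incomplete gamma function of integer order, which
is a finite sum of terms `t₁^{2k} e^{-πn²t₁²}`. Multiplied by `t₁^{2ℓ₁-1} e^{-πm²t₁²}`, each of them
integrates to a power of `m² + n²` in the denominator, next to a power of `n²`.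
-/

open Complex Real MeasureTheory Finset

/-- Jacobi theta function minus its constant term: `θ⁰(t) = 2∑_{n ≥ 1} e^{-π n² t²}`. -/
noncomputable def theta0 (t : ℝ) : ℝ := 2 * ∑' n : ℕ, Real.exp (-(π * ((n : ℝ) + 1) ^ 2 * t ^ 2))

/-- `D(s₁,s₂) = ∫_{0 ≤ t₁ ≤ t₂ ≤ ∞} θ⁰(t₁)t₁^{s₁-1} θ⁰(t₂)t₂^{s₂-1}`. -/
noncomputable def Dfun (s₁ s₂ : ℂ) : ℂ :=
  ∫ t₂ in Set.Ioi (0 : ℝ),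
    (∫ t₁ in Set.Ioc (0 : ℝ) t₂, (theta0 t₁ : ℂ) * (t₁ : ℂ) ^ (s₁ - 1)) *
      ((theta0 t₂ : ℂ) * (t₂ : ℂ) ^ (s₂ - 1))

/-- Multiple quadratic sum `Q(k₁,k₂) = ∑_{m,n ≥ 1} (m²+n²)^{-k₁} n^{-2k₂}`. -/
noncomputable def Qsum (k₁ k₂ : ℕ) : ℝ :=
  ∑' p : ℕ × ℕ,
    1 / ((((p.1 + 1 : ℝ) ^ 2 + (p.2 + 1 : ℝ) ^ 2) ^ k₁) * ((p.2 + 1 : ℝ) ^ (2 * k₂)))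

section TriangleIntegral

variable {α 𝕜 : Type*} [LinearOrder α] [MeasurableSpace α] [RCLike 𝕜] {μ : Measure α} {a : α}

lemma setIntegral_Ioc_norm_le_setIntegral_Ioi_norm {f : α → 𝕜}
    (hf : IntegrableOn f (Set.Ioi a) μ) (t : α) :
    ∫ s in Set.Ioc a t, ‖f s‖ ∂μ ≤ ∫ s in Set.Ioi a, ‖f s‖ ∂μ :=
  setIntegral_mono_set hf.norm (.of_forall fun _ ↦ norm_nonneg _)
    Set.Ioc_subset_Ioi_self.eventuallyLE

lemma norm_setIntegral_Ioc_le_setIntegral_Ioi_norm {f : α → 𝕜}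
    (hf : IntegrableOn f (Set.Ioi a) μ) (t : α) :
    ‖∫ s in Set.Ioc a t, f s ∂μ‖ ≤ ∫ s in Set.Ioi a, ‖f s‖ ∂μ :=
  (norm_integral_le_integral_norm f).trans (setIntegral_Ioc_norm_le_setIntegral_Ioi_norm hf t)

variable [TopologicalSpace α] [OrderClosedTopology α] [OpensMeasurableSpace α]

lemma setIntegral_Ioc_mul_eq_setIntegral_Ioi_indicator (f g : α → 𝕜) (t : α) :
    (∫ s in Set.Ioc a t, f s ∂μ) * g t =
      ∫ s in Set.Ioi a, {p : α × α | p.2 ≤ p.1}.indicator (fun p ↦ f p.2 * g p.1) (t, s) ∂μ := by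
  rw [← Set.Ioi_inter_Iic, ← setIntegral_indicator measurableSet_Iic, ← integral_mul_const]
  simp [Set.indicator_apply]

lemma mul_setIntegral_Ici_eq_setIntegral_Ioi_indicator (f g : α → 𝕜) {s : α} (hs : a < s) :
    f s * ∫ t in Set.Ici s, g t ∂μ =
      ∫ t in Set.Ioi a, {p : α × α | p.2 ≤ p.1}.indicator (fun p ↦ f p.2 * g p.1) (t, s) ∂μ := by
  rw [← Set.inter_eq_right.2 (Set.Ici_subset_Ioi.2 hs), ← setIntegral_indicator measurableSet_Ici,
    ← integral_const_mul]
  simp [Set.indicator_apply]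

lemma hasSum_setIntegral_Ioc {ι : Type*} [Countable ι] {f : ι → α → 𝕜} {F : α → 𝕜}
    (hf : ∀ i, IntegrableOn (f i) (Set.Ioi a) μ)
    (hf_summable : Summable fun i ↦ ∫ t in Set.Ioi a, ‖f i t‖ ∂μ)
    (hF : ∀ t ∈ Set.Ioi a, HasSum (fun i ↦ f i t) (F t)) (t : α) :
    HasSum (fun i ↦ ∫ s in Set.Ioc a t, f i s ∂μ) (∫ s in Set.Ioc a t, F s ∂μ) := by
  rw [setIntegral_congr_fun measurableSet_Ioc fun s hs ↦ (hF s hs.1).tsum_eq.symm]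
  exact hasSum_integral_of_summable_integral_norm
    (fun i ↦ (hf i).mono_set Set.Ioc_subset_Ioi_self)
    (hf_summable.of_nonneg_of_le (fun i ↦ by positivity)
      fun i ↦ setIntegral_Ioc_norm_le_setIntegral_Ioi_norm (hf i) t)

variable [SecondCountableTopology α]

lemma integrable_indicator_le_mul {ν ρ : Measure α} [SFinite ν] [SFinite ρ] {f g : α → 𝕜}
    (hf : Integrable f ν) (hg : Integrable g ρ) :
    Integrable ({p : α × α | p.2 ≤ p.1}.indicator fun p ↦ f p.2 * g p.1) (ρ.prod ν) := by
  simpa only [mul_comm (g _)] using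
    (hg.mul_prod hf).indicator (measurableSet_le measurable_snd measurable_fst)

variable [SFinite μ]

lemma integrableOn_setIntegral_Ioc_mul {f g : α → 𝕜}
    (hf : IntegrableOn f (Set.Ioi a) μ) (hg : IntegrableOn g (Set.Ioi a) μ) :
    IntegrableOn (fun t ↦ (∫ s in Set.Ioc a t, f s ∂μ) * g t) (Set.Ioi a) μ := by
  simp only [setIntegral_Ioc_mul_eq_setIntegral_Ioi_indicator]
  exact (integrable_indicator_le_mul hf hg).integral_prod_left

theorem setIntegral_Ioi_setIntegral_Ioc_mul {f g : α → 𝕜}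
    (hf : IntegrableOn f (Set.Ioi a) μ) (hg : IntegrableOn g (Set.Ioi a) μ) :
    ∫ t in Set.Ioi a, (∫ s in Set.Ioc a t, f s ∂μ) * g t ∂μ =
      ∫ s in Set.Ioi a, f s * ∫ t in Set.Ici s, g t ∂μ ∂μ := by
  simp only [setIntegral_Ioc_mul_eq_setIntegral_Ioi_indicator]
  rw [setIntegral_congr_fun measurableSet_Ioi fun s hs ↦
    mul_setIntegral_Ici_eq_setIntegral_Ioi_indicator f g hs]
  exact integral_integral_swap (integrable_indicator_le_mul hf hg)

theorem hasSum_setIntegral_Ioi_setIntegral_Ioc_mul {ι κ : Type*} [Countable ι] [Countable κ]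
    {f : ι → α → 𝕜} {g : κ → α → 𝕜} {F G : α → 𝕜}
    (hf : ∀ i, IntegrableOn (f i) (Set.Ioi a) μ) (hg : ∀ j, IntegrableOn (g j) (Set.Ioi a) μ)
    (hf_summable : Summable fun i ↦ ∫ t in Set.Ioi a, ‖f i t‖ ∂μ)
    (hg_summable : Summable fun j ↦ ∫ t in Set.Ioi a, ‖g j t‖ ∂μ)
    (hF : ∀ t ∈ Set.Ioi a, HasSum (fun i ↦ f i t) (F t))
    (hG : ∀ t ∈ Set.Ioi a, HasSum (fun j ↦ g j t) (G t)) :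
    HasSum (fun p : ι × κ ↦ ∫ t in Set.Ioi a, (∫ s in Set.Ioc a t, f p.1 s ∂μ) * g p.2 t ∂μ)
      (∫ t in Set.Ioi a, (∫ s in Set.Ioc a t, F s ∂μ) * G t ∂μ) := by
  have hasSum_integrand (t : α) (ht : t ∈ Set.Ioi a) :
      HasSum (fun p : ι × κ ↦ (∫ s in Set.Ioc a t, f p.1 s ∂μ) * g p.2 t)
        ((∫ s in Set.Ioc a t, F s ∂μ) * G t) := by
    have inner := hasSum_setIntegral_Ioc hf hf_summable hF t
    apply inner.mul (hG t ht)
    apply summable_mul_of_summable_norm inner.summable.norm (hG t ht).summable.norm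
  have integrable (p : ι × κ) := integrableOn_setIntegral_Ioc_mul (hf p.1) (hg p.2)
  have integral_norm_le (p : ι × κ) :
      ∫ t in Set.Ioi a, ‖(∫ s in Set.Ioc a t, f p.1 s ∂μ) * g p.2 t‖ ∂μ ≤
        (∫ t in Set.Ioi a, ‖f p.1 t‖ ∂μ) * ∫ t in Set.Ioi a, ‖g p.2 t‖ ∂μ := by
    rw [← integral_const_mul]
    refine integral_mono (integrable p).norm ((hg p.2).norm.const_mul _) fun t ↦ ?_
    simp only [norm_mul]
    gcongr
    exact norm_setIntegral_Ioc_le_setIntegral_Ioi_norm (hf p.1) t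
  rw [setIntegral_congr_fun measurableSet_Ioi fun t ht ↦ (hasSum_integrand t ht).tsum_eq.symm]
  refine hasSum_integral_of_summable_integral_norm integrable ?_
  exact (hf_summable.mul_of_nonneg hg_summable (fun i ↦ by positivity)
    (fun j ↦ by positivity)).of_nonneg_of_le (fun p ↦ by positivity) integral_norm_le

end TriangleIntegral

section GaussianMonomial

open Filter Topology
open scoped Nat

/-- The regularized upper incomplete gamma function `Γ(L + 1, x) / L!` of integer order, in its
closed form `e^{-x} ∑_{j ≤ L} x^j / j!`. -/
noncomputable def gammaTail (L : ℕ) (x : ℝ) : ℝ :=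
  ∑ j ∈ range (L + 1), x ^ j / j ! * Real.exp (-x)

@[simp]
lemma gammaTail_zero_right (L : ℕ) : gammaTail L 0 = 1 := by
  simp [gammaTail, sum_range_succ']

lemma hasDerivAt_gammaTail (L : ℕ) (x : ℝ) :
    HasDerivAt (gammaTail L) (-(x ^ L / L ! * Real.exp (-x))) x := by
  have hasDerivAt_exp_neg : HasDerivAt (fun x ↦ Real.exp (-x)) (-Real.exp (-x)) x := by
    simpa using (hasDerivAt_neg x).exp
  induction L with
  | zero =>
    have gammaTail_zero : gammaTail 0 = fun x ↦ Real.exp (-x) := by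
      ext x
      simp [gammaTail]
    simpa [gammaTail_zero] using hasDerivAt_exp_neg
  | succ L ih =>
    have gammaTail_succ :
        gammaTail (L + 1) = fun x ↦ gammaTail L x + x ^ (L + 1) / (L + 1)! * Real.exp (-x) :=
      funext fun x ↦ sum_range_succ _ _
    rw [gammaTail_succ]
    refine (ih.add (((hasDerivAt_pow (L + 1) x).div_const _).mul hasDerivAt_exp_neg)).congr_deriv ?_
    rw [Nat.factorial_succ]
    push_cast
    field_simp
    simp

lemma tendsto_gammaTail_atTop (L : ℕ) : Tendsto (gammaTail L) atTop (𝓝 0) := by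
  have tendsto_term (j : ℕ) : Tendsto (fun x ↦ x ^ j / j ! * Real.exp (-x)) atTop (𝓝 0) := by
    simpa [div_mul_eq_mul_div] using
      (Real.tendsto_pow_mul_exp_neg_atTop_nhds_zero j).div_const (j ! : ℝ)
  unfold gammaTail
  simpa using tendsto_finsetSum (range (L + 1)) fun j _ ↦ tendsto_term j

/-- The Gaussian `e^{-at²}` times the odd monomial `2 t^{2L+1}`; summed over `a = πn²`, `n ≥ 1`,
these functions give `θ⁰(t) t^{2L+1}`. -/
noncomputable def gaussianMonomial (a : ℝ) (L : ℕ) (t : ℝ) : ℝ :=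
  2 * t ^ (2 * L + 1) * Real.exp (-(a * t ^ 2))

variable {a b c : ℝ}

lemma gaussianMonomial_nonneg (a : ℝ) (L : ℕ) {t : ℝ} (ht : 0 ≤ t) :
    0 ≤ gaussianMonomial a L t := by
  unfold gaussianMonomial
  positivity

lemma hasDerivAt_gammaTail_mul_sq (ha : a ≠ 0) (L : ℕ) (t : ℝ) :
    HasDerivAt (fun t ↦ L ! / a ^ (L + 1) * gammaTail L (a * t ^ 2))
      (-gaussianMonomial a L t) t := by
  have := (hasDerivAt_gammaTail L (a * t ^ 2)).comp t ((hasDerivAt_pow 2 t).const_mul a)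
  refine (this.const_mul (L ! / a ^ (L + 1) : ℝ)).congr_deriv ?_
  unfold gaussianMonomial
  field_simp
  ring

lemma tendsto_gammaTail_mul_sq_atTop (ha : 0 < a) (L : ℕ) :
    Tendsto (fun t ↦ L ! / a ^ (L + 1) * gammaTail L (a * t ^ 2)) atTop (𝓝 0) := by
  simpa using ((tendsto_gammaTail_atTop L).comp
    ((tendsto_pow_atTop two_ne_zero).const_mul_atTop ha)).const_mul (L ! / a ^ (L + 1) : ℝ)

lemma integrableOn_gaussianMonomial (ha : 0 < a) (L : ℕ) :
    IntegrableOn (gaussianMonomial a L) (Set.Ioi 0) := by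
  simpa using (integrableOn_Ioi_deriv_of_nonpos' (fun t _ ↦ hasDerivAt_gammaTail_mul_sq ha.ne' L t)
    (fun t ht ↦ neg_nonpos.2 (gaussianMonomial_nonneg a L (le_of_lt ht)))
    (tendsto_gammaTail_mul_sq_atTop ha L)).neg

lemma integral_Ioi_gaussianMonomial (ha : 0 < a) (L : ℕ) (hc : 0 ≤ c) :
    ∫ t in Set.Ioi c, gaussianMonomial a L t = L ! / a ^ (L + 1) * gammaTail L (a * c ^ 2) := by
  have := integral_Ioi_of_hasDerivAt_of_nonpos'
    (fun t _ ↦ hasDerivAt_gammaTail_mul_sq ha.ne' L t)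
    (fun t (ht : c < t) ↦ neg_nonpos.2 (gaussianMonomial_nonneg a L (hc.trans ht.le)))
    (tendsto_gammaTail_mul_sq_atTop ha L)
  simpa [integral_neg] using this

lemma integral_Ioi_zero_gaussianMonomial (ha : 0 < a) (L : ℕ) :
    ∫ t in Set.Ioi 0, gaussianMonomial a L t = L ! / a ^ (L + 1) := by
  simp [integral_Ioi_gaussianMonomial ha L le_rfl]

lemma gaussianMonomial_mul_gammaTail (a b : ℝ) (L M : ℕ) (t : ℝ) :
    gaussianMonomial a L t * gammaTail M (b * t ^ 2) =
      ∑ k ∈ range (M + 1), b ^ k / k ! * gaussianMonomial (a + b) (L + k) t := by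
  have exp_add_mul_sq : Real.exp (-((a + b) * t ^ 2)) =
      Real.exp (-(a * t ^ 2)) * Real.exp (-(b * t ^ 2)) := by
    rw [← Real.exp_add]
    ring_nf
  rw [gammaTail, mul_sum]
  refine sum_congr rfl fun k _ ↦ ?_
  rw [gaussianMonomial, gaussianMonomial, exp_add_mul_sq]
  ring

lemma integral_gaussianMonomial_mul_gammaTail (hab : 0 < a + b) (L M : ℕ) :
    ∫ t in Set.Ioi 0, gaussianMonomial a L t * gammaTail M (b * t ^ 2) =
      ∑ k ∈ range (M + 1), b ^ k / k ! * ((L + k)! / (a + b) ^ (L + k + 1)) := by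
  simp_rw [gaussianMonomial_mul_gammaTail]
  rw [integral_finsetSum _ fun k _ ↦ (integrableOn_gaussianMonomial hab (L + k)).const_mul _]
  simp_rw [integral_const_mul, integral_Ioi_zero_gaussianMonomial hab]

theorem integral_Ioi_integral_Ioc_gaussianMonomial_mul (ha : 0 < a) (hb : 0 < b) (L M : ℕ) :
    ∫ t in Set.Ioi 0, (∫ s in Set.Ioc 0 t, gaussianMonomial a L s) * gaussianMonomial b M t =
      L ! * M ! * ∑ k ∈ range (M + 1),
        (L + k).choose k / ((a + b) ^ (L + 1 + k) * b ^ (M + 1 - k)) := by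
  have integral_Ici_eq (s : ℝ) (hs : s ∈ Set.Ioi 0) :
      gaussianMonomial a L s * ∫ t in Set.Ici s, gaussianMonomial b M t =
        M ! / b ^ (M + 1) * (gaussianMonomial a L s * gammaTail M (b * s ^ 2)) := by
    rw [integral_Ici_eq_integral_Ioi, integral_Ioi_gaussianMonomial hb M (le_of_lt hs)]
    ring
  rw [setIntegral_Ioi_setIntegral_Ioc_mul (integrableOn_gaussianMonomial ha L)
      (integrableOn_gaussianMonomial hb M),
    setIntegral_congr_fun measurableSet_Ioi integral_Ici_eq, integral_const_mul,
    integral_gaussianMonomial_mul_gammaTail (add_pos ha hb), mul_sum, mul_sum]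
  refine sum_congr rfl fun k hk ↦ ?_
  have hk : k ≤ M + 1 := (mem_range.1 hk).le
  have pow_split : b ^ (M + 1) = b ^ (M + 1 - k) * b ^ k := by
    rw [← pow_add, Nat.sub_add_cancel hk]
  have factorial_eq : ((L + k)! : ℝ) = (L + k).choose k * L ! * k ! := by
    exact_mod_cast (Nat.add_choose_mul_factorial_mul_factorial L k).symm
  rw [pow_split, factorial_eq, add_right_comm L 1 k]
  field_simp

end GaussianMonomial

section ThetaSeries

open scoped Nat

/-- The exponents `π n²`, `n ≥ 1`, of the theta series, indexed from `0` as in `theta0`. -/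
noncomputable def thetaExponent (n : ℕ) : ℝ := π * ((n : ℝ) + 1) ^ 2

lemma thetaExponent_pos (n : ℕ) : 0 < thetaExponent n := by
  unfold thetaExponent
  positivity

lemma summable_exp_neg_thetaExponent_mul {x : ℝ} (hx : 0 < x) :
    Summable fun n ↦ Real.exp (-(thetaExponent n * x)) := by
  simpa [Function.comp_def, thetaExponent] using
    (HurwitzZeta.hasSum_int_evenKernel 1 hx).summable.comp_injective Nat.cast_injective

lemma hasSum_gaussianMonomial_thetaExponent (L : ℕ) {t : ℝ} (ht : 0 < t) :
    HasSum (fun n ↦ gaussianMonomial (thetaExponent n) L t) (theta0 t * t ^ (2 * L + 1)) := by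
  rw [show theta0 t * t ^ (2 * L + 1) =
      2 * t ^ (2 * L + 1) * ∑' n : ℕ, Real.exp (-(thetaExponent n * t ^ 2)) by
    unfold theta0 thetaExponent; ring]
  exact (summable_exp_neg_thetaExponent_mul (pow_pos ht 2)).hasSum.mul_left _

lemma summable_one_div_nat_add_one_sq_pow {k : ℕ} (hk : k ≠ 0) :
    Summable fun n : ℕ ↦ 1 / ((n + 1 : ℝ) ^ 2) ^ k := by
  have := (summable_nat_add_iff 1).2
    (Real.summable_one_div_nat_pow.2 (show 1 < 2 * k by omega))
  simpa [← pow_mul] using this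

lemma summable_integral_norm_gaussianMonomial_thetaExponent (L : ℕ) :
    Summable fun n ↦ ∫ t in Set.Ioi 0, ‖gaussianMonomial (thetaExponent n) L t‖ := by
  have integral_norm_eq (n : ℕ) : ∫ t in Set.Ioi 0, ‖gaussianMonomial (thetaExponent n) L t‖ =
      L ! / π ^ (L + 1) * (1 / ((n + 1 : ℝ) ^ 2) ^ (L + 1)) := by
    rw [setIntegral_congr_fun measurableSet_Ioi fun t ht ↦
        Real.norm_of_nonneg (gaussianMonomial_nonneg _ L (le_of_lt ht)),
      integral_Ioi_zero_gaussianMonomial (thetaExponent_pos n), thetaExponent, mul_pow,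
      div_mul_div_comm, mul_one]
  simp_rw [integral_norm_eq]
  exact (summable_one_div_nat_add_one_sq_pow L.succ_ne_zero).mul_left _

theorem hasSum_integral_Ioc_theta0_mul (L M : ℕ) :
    HasSum (fun p : ℕ × ℕ ↦ ∫ t in Set.Ioi (0 : ℝ),
        (∫ s in Set.Ioc 0 t, gaussianMonomial (thetaExponent p.1) L s) *
          gaussianMonomial (thetaExponent p.2) M t)
      (∫ t in Set.Ioi 0, (∫ s in Set.Ioc 0 t, theta0 s * s ^ (2 * L + 1)) *
        (theta0 t * t ^ (2 * M + 1))) :=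
  hasSum_setIntegral_Ioi_setIntegral_Ioc_mul
    (f := fun m ↦ gaussianMonomial (thetaExponent m) L)
    (g := fun n ↦ gaussianMonomial (thetaExponent n) M)
    (fun m ↦ integrableOn_gaussianMonomial (thetaExponent_pos m) L)
    (fun n ↦ integrableOn_gaussianMonomial (thetaExponent_pos n) M)
    (summable_integral_norm_gaussianMonomial_thetaExponent L)
    (summable_integral_norm_gaussianMonomial_thetaExponent M)
    (fun _ ht ↦ hasSum_gaussianMonomial_thetaExponent L ht)
    (fun _ ht ↦ hasSum_gaussianMonomial_thetaExponent M ht)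

lemma Dfun_two_mul_succ (L M : ℕ) :
    Dfun (2 * (L + 1 : ℕ)) (2 * (M + 1 : ℕ)) =
      ((∫ t in Set.Ioi 0, (∫ s in Set.Ioc 0 t, theta0 s * s ^ (2 * L + 1)) *
        (theta0 t * t ^ (2 * M + 1)) : ℝ) : ℂ) := by
  have cpow_eq (t : ℝ) (L : ℕ) :
      (t : ℂ) ^ (2 * ((L + 1 : ℕ) : ℂ) - 1) = ((t ^ (2 * L + 1) : ℝ) : ℂ) := by
    rw [show 2 * ((L + 1 : ℕ) : ℂ) - 1 = (2 * L + 1 : ℕ) by push_cast; ring,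
      Complex.cpow_natCast, Complex.ofReal_pow]
  simp only [Dfun, cpow_eq, ← Complex.ofReal_mul, integral_complex_ofReal]

end ThetaSeries

section QuadraticSum

open scoped Nat

lemma hasSum_Qsum {k₁ k₂ : ℕ} (hk₁ : k₁ ≠ 0) (hk₂ : k₂ ≠ 0) :
    HasSum (fun p : ℕ × ℕ ↦
        1 / (((p.1 + 1 : ℝ) ^ 2 + (p.2 + 1 : ℝ) ^ 2) ^ k₁ * (p.2 + 1 : ℝ) ^ (2 * k₂)))
      (Qsum k₁ k₂) := by
  refine Summable.hasSum ?_
  refine ((summable_one_div_nat_add_one_sq_pow hk₁).mul_of_nonneg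
    (summable_one_div_nat_add_one_sq_pow hk₂) (fun n ↦ by positivity)
    (fun n ↦ by positivity)).of_nonneg_of_le (fun p ↦ by positivity) fun p ↦ ?_
  rw [← one_div_mul_one_div, pow_mul]
  gcongr
  exact le_add_of_nonneg_right (by positivity)

lemma integral_thetaExponent_eq_sum (L M : ℕ) (p : ℕ × ℕ) :
    ∫ t in Set.Ioi 0, (∫ s in Set.Ioc 0 t, gaussianMonomial (thetaExponent p.1) L s) *
        gaussianMonomial (thetaExponent p.2) M t =
      L ! * M ! / π ^ (L + 1 + (M + 1)) * ∑ k ∈ range (M + 1), (L + k).choose k *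
        (1 / (((p.1 + 1 : ℝ) ^ 2 + (p.2 + 1 : ℝ) ^ 2) ^ (L + 1 + k) *
          (p.2 + 1 : ℝ) ^ (2 * (M + 1 - k)))) := by
  rw [integral_Ioi_integral_Ioc_gaussianMonomial_mul (thetaExponent_pos _) (thetaExponent_pos _),
    mul_sum, mul_sum]
  refine sum_congr rfl fun k hk ↦ ?_
  have hk : k ≤ M + 1 := (mem_range.1 hk).le
  have pi_pow_split : π ^ (L + 1 + (M + 1)) = π ^ (L + 1 + k) * π ^ (M + 1 - k) := by
    rw [← pow_add]
    congr 1
    omega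
  rw [thetaExponent, thetaExponent, ← mul_add, mul_pow, mul_pow, pi_pow_split, pow_mul]
  field_simp

theorem integral_Ioc_theta0_mul_eq_sum_Qsum (L M : ℕ) :
    ∫ t in Set.Ioi 0, (∫ s in Set.Ioc 0 t, theta0 s * s ^ (2 * L + 1)) *
        (theta0 t * t ^ (2 * M + 1)) =
      L ! * M ! / π ^ (L + 1 + (M + 1)) *
        ∑ k ∈ range (M + 1), (L + k).choose k * Qsum (L + 1 + k) (M + 1 - k) := by
  refine (hasSum_integral_Ioc_theta0_mul L M).unique ?_
  simp_rw [integral_thetaExponent_eq_sum]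
  refine (hasSum_sum fun k hk ↦ (hasSum_Qsum (by omega) ?_).mul_left _).mul_left _
  have := mem_range.1 hk
  omega

end QuadraticSum

/-- `D(2ℓ₁,2ℓ₂) = ((ℓ₁-1)!(ℓ₂-1)!/π^{ℓ₁+ℓ₂}) ∑_{k=0}^{ℓ₂-1} C(ℓ₁+k-1,k) Q(ℓ₁+k,ℓ₂-k)`. -/
theorem D_totally_even_eq_quadratic_sums (ℓ₁ ℓ₂ : ℕ) (h₁ : 1 ≤ ℓ₁) (h₂ : 1 ≤ ℓ₂) :
    Dfun (2 * ℓ₁) (2 * ℓ₂) =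
      (((Nat.factorial (ℓ₁ - 1) * Nat.factorial (ℓ₂ - 1) : ℝ) / π ^ (ℓ₁ + ℓ₂)) *
          ∑ k ∈ Finset.range ℓ₂,
            (Nat.choose (ℓ₁ + k - 1) k : ℝ) * Qsum (ℓ₁ + k) (ℓ₂ - k) : ℝ) := by
  obtain ⟨L, rfl⟩ := Nat.exists_eq_add_of_le' h₁
  obtain ⟨M, rfl⟩ := Nat.exists_eq_add_of_le' h₂
  rw [Dfun_two_mul_succ, integral_Ioc_theta0_mul_eq_sum_Qsum]
  simp only [Nat.add_sub_cancel, add_right_comm L 1]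
end

section
/- For every integer ℓ ≥ 1, ∑_{m,n≥1} 1/((m²+n²)^ℓ · n²) + ((1−ℓ)/2)·∑_{m≥1} 1/m^{2ℓ+2} = (π^{ℓ+1}/(ℓ−1)!)·ξ(2ℓ, 2), where ξ(s₁,s₂) denotes the double Riemann ξ-function. -/
open Complex Real MeasureTheory

/-- Full Jacobi theta function `θ = 1 + θ⁰`. -/
noncomputable def thetaFull (t : ℝ) : ℝ := 1 + theta0 t

/-- The double Riemann ξ-function, defined by the regularized iterated Mellin
transform (valid for `Re s₁, Re s₂ > 1`). -/
noncomputable def doubleXi (s₁ s₂ : ℂ) : ℂ :=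
  (∫ t₂ in Set.Ioi (0 : ℝ),
      (∫ t₁ in Set.Ioc (0 : ℝ) t₂, (thetaFull t₁ : ℂ) * (t₁ : ℂ) ^ (s₁ - 1)) *
        ((theta0 t₂ : ℂ) * (t₂ : ℂ) ^ (s₂ - 1))) -
    (∫ t₂ in Set.Ioi (0 : ℝ),
      (∫ t₁ in Set.Ioc (0 : ℝ) t₂, (t₁ : ℂ) ^ (s₂ - 1)) *
        ((theta0 t₂ : ℂ) * (t₂ : ℂ) ^ (s₁ - 1)))

open Set Filter Topology

/-!
In the first integral of `ξ(s, 2)` integrate over the larger variable first. Since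
`∫_x^∞ e^{-π n² t²} t dt = e^{-π n² x²} / (2 π n²)`, what remains is the Mellin transform at `s` of
`θ · τ`, where `τ(x) = ∑ e^{-π n² x²} / (π n²)`. In the second integral the inner variable
integrates to a power, which leaves `½` times the Mellin transform of `θ⁰` at `s + 2`. Expand
`θ τ = τ + θ⁰ τ` into Gaussians and transform termwise: `θ⁰ τ` yields the double series, while `τ`
and the second integral both yield multiples of `ζ(s + 2)`.
-/

section Integration

theorem integrable_tsum_of_summable_integral_norm {α E ι : Type*} [MeasurableSpace α]
    {μ : Measure α} [NormedAddCommGroup E] [CompleteSpace E] [Countable ι] {F : ι → α → E}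
    (hF : ∀ i, Integrable (F i) μ) (hsum : Summable fun i ↦ ∫ a, ‖F i a‖ ∂μ) :
    Integrable (fun a ↦ ∑' i, F i a) μ := by
  refine ⟨AEStronglyMeasurable.tsum fun i ↦ (hF i).1, ?_⟩
  calc ∫⁻ a, ‖∑' i, F i a‖ₑ ∂μ
      ≤ ∫⁻ a, ∑' i, ‖F i a‖ₑ ∂μ := lintegral_mono fun _ ↦ enorm_tsum_le_tsum_enorm
    _ = ∑' i, ∫⁻ a, ‖F i a‖ₑ ∂μ := lintegral_tsum fun i ↦ (hF i).1.enorm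
    _ = ∑' i, ENNReal.ofReal (∫ a, ‖F i a‖ ∂μ) :=
        tsum_congr fun i ↦ (ofReal_integral_norm_eq_lintegral_enorm (hF i)).symm
    _ < ⊤ := hsum.tsum_ofReal_ne_top.lt_top

theorem setIntegral_Ioi_indicator_Ici {E : Type*} [NormedAddCommGroup E] [NormedSpace ℝ E]
    {a x : ℝ} (hx : a < x) (f : ℝ → E) :
    ∫ y in Ioi a, (Ici x).indicator f y = ∫ y in Ioi x, f y := by
  rw [setIntegral_indicator measurableSet_Ici, inter_eq_right.2 (Ici_subset_Ioi.2 hx),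
    integral_Ici_eq_integral_Ioi]

theorem integral_Ioi_integral_Ioc_mul_swap {𝕜 : Type*} [RCLike 𝕜] {f g : ℝ → 𝕜} {a : ℝ}
    (hf : AEStronglyMeasurable f (volume.restrict (Ioi a))) (hg : IntegrableOn g (Ioi a))
    (hfg : IntegrableOn (fun x ↦ ‖f x‖ * ∫ y in Ioi x, ‖g y‖) (Ioi a)) :
    ∫ y in Ioi a, (∫ x in Ioc a y, f x) * g y = ∫ x in Ioi a, f x * ∫ y in Ioi x, g y := by
  let H : ℝ → ℝ → 𝕜 := fun y x ↦ (Iic y).indicator f x * g y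
  have hH_left (y : ℝ) : ∫ x in Ioi a, H y x = (∫ x in Ioc a y, f x) * g y := by
    simp only [H]
    rw [integral_mul_const, setIntegral_indicator measurableSet_Iic, Ioi_inter_Iic]
  have hH_eq (x y : ℝ) : H y x = f x * (Ici x).indicator g y := by
    by_cases hxy : x ≤ y <;> simp [H, indicator, hxy]
  have hH_meas : AEStronglyMeasurable (Function.uncurry H)
      ((volume.restrict (Ioi a)).prod (volume.restrict (Ioi a))) := by
    have : Function.uncurry H = {p : ℝ × ℝ | p.2 ≤ p.1}.indicator fun p ↦ f p.2 * g p.1 := by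
      ext ⟨y, x⟩
      by_cases hxy : x ≤ y <;> simp [H, indicator, hxy]
    rw [this]
    exact (hf.comp_snd.mul hg.1.comp_fst).indicator
      (measurableSet_le measurable_snd measurable_fst)
  have hH_int : Integrable (Function.uncurry H)
      ((volume.restrict (Ioi a)).prod (volume.restrict (Ioi a))) := by
    refine (integrable_prod_iff' hH_meas).2 ⟨.of_forall fun x ↦ ?_, ?_⟩
    · simp only [Function.uncurry, hH_eq]
      exact (hg.indicator measurableSet_Ici).const_mul _
    · refine hfg.congr_fun (fun x hx ↦ ?_) measurableSet_Ioi
      simp only [Function.uncurry, hH_eq, norm_mul, norm_indicator_eq_indicator_norm]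
      rw [integral_const_mul, setIntegral_Ioi_indicator_Ici hx]
  calc ∫ y in Ioi a, (∫ x in Ioc a y, f x) * g y
      = ∫ y in Ioi a, ∫ x in Ioi a, H y x := by simp only [hH_left]
    _ = ∫ x in Ioi a, ∫ y in Ioi a, H y x := integral_integral_swap hH_int
    _ = ∫ x in Ioi a, f x * ∫ y in Ioi x, g y := by
        refine setIntegral_congr_fun measurableSet_Ioi fun x hx ↦ ?_
        simp only [hH_eq]
        rw [integral_const_mul, setIntegral_Ioi_indicator_Ici hx]

theorem integral_Ioi_mul_exp_neg_mul_sq {b : ℝ} (hb : 0 < b) (a : ℝ) :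
    ∫ t in Ioi a, t * rexp (-b * t ^ 2) = rexp (-b * a ^ 2) / (2 * b) := by
  have hderiv (t : ℝ) :
      HasDerivAt (fun t ↦ -rexp (-b * t ^ 2) / (2 * b)) (t * rexp (-b * t ^ 2)) t := by
    refine ((((hasDerivAt_pow 2 t).const_mul (-b)).exp.neg).div_const (2 * b)).congr_deriv ?_
    push_cast
    field_simp
  have hlim : Tendsto (fun t ↦ -rexp (-b * t ^ 2) / (2 * b)) atTop (𝓝 0) := by
    have h := tendsto_exp_atBot.comp
      ((tendsto_pow_atTop (α := ℝ) two_ne_zero).const_mul_atTop_of_neg (neg_lt_zero.2 hb))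
    simpa using h.neg.div_const (2 * b)
  rw [integral_Ioi_of_hasDerivAt_of_tendsto' (fun t _ ↦ hderiv t)
    (integrable_mul_exp_neg_mul_sq hb).integrableOn hlim]
  ring

end Integration

section Mellin

variable {ι : Type*} [Countable ι] {a : ι → ℂ} {p : ι → ℝ} {F : ℝ → ℂ} {s : ℂ}

theorem norm_cpow_smul_gaussian {t : ℝ} (ht : 0 < t) (s c : ℂ) (b : ℝ) :
    ‖(t : ℂ) ^ (s - 1) • (c * rexp (-b * t ^ 2))‖ =
      ‖c‖ * (t ^ (s.re - 1) * rexp (-b * t ^ 2)) := by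
  rw [norm_smul, norm_mul, norm_cpow_eq_rpow_re_of_pos ht, Complex.norm_real,
    Real.norm_of_nonneg (exp_nonneg _), sub_re, one_re]
  ring

theorem mellinConvergent_gaussian {b : ℝ} (hb : 0 < b) (hs : 0 < s.re) (c : ℂ) :
    MellinConvergent (fun t ↦ c * rexp (-b * t ^ 2)) s := by
  have hdom := (integrableOn_rpow_mul_exp_neg_mul_sq hb (by linarith : -1 < s.re - 1)).const_mul
    ‖c‖
  have hcont : ContinuousOn (fun t : ℝ ↦ (t : ℂ) ^ (s - 1) • (c * (rexp (-b * t ^ 2) : ℂ)))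
      (Ioi 0) := fun t ht ↦
    ((continuousAt_ofReal_cpow_const t (s - 1) (.inr (ne_of_gt ht))).smul
      (Continuous.continuousAt (by fun_prop))).continuousWithinAt
  refine hdom.mono' (hcont.aestronglyMeasurable measurableSet_Ioi) ?_
  filter_upwards [ae_restrict_mem measurableSet_Ioi] with t ht
  exact (norm_cpow_smul_gaussian ht s c b).le

theorem integral_norm_cpow_smul_gaussian {b : ℝ} (hb : 0 < b) (hs : 0 < s.re) (c : ℂ) :
    ∫ t in Ioi (0 : ℝ), ‖(t : ℂ) ^ (s - 1) • (c * rexp (-b * t ^ 2))‖ =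
      Real.Gamma (s.re / 2) / 2 * (‖c‖ / b ^ (s.re / 2)) := by
  have hmoment : ∫ t in Ioi (0 : ℝ), t ^ (s.re - 1) * rexp (-b * t ^ 2) =
      b ^ (-(s.re / 2)) * (1 / 2) * Real.Gamma (s.re / 2) := by
    have h := _root_.integral_rpow_mul_exp_neg_mul_rpow two_pos (by linarith : -1 < s.re - 1) hb
    simpa [neg_div] using h
  rw [setIntegral_congr_fun measurableSet_Ioi fun t ht ↦ norm_cpow_smul_gaussian ht s c b,
    integral_const_mul, hmoment, rpow_neg hb.le]
  ring

theorem mellinConvergent_of_hasSum_gaussian (hp : ∀ i, 0 < p i) (hs : 0 < s.re)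
    (hF : ∀ t ∈ Ioi 0, HasSum (fun i ↦ a i * rexp (-p i * t ^ 2)) (F t))
    (hsum : Summable fun i ↦ ‖a i‖ / p i ^ (s.re / 2)) : MellinConvergent F s := by
  have hint := integrable_tsum_of_summable_integral_norm
    (fun i ↦ mellinConvergent_gaussian (hp i) hs (a i))
    (by simpa only [integral_norm_cpow_smul_gaussian (hp _) hs] using hsum.mul_left _)
  exact IntegrableOn.congr_fun hint (fun t ht ↦ ((hF t ht).const_smul _).tsum_eq) measurableSet_Ioi

theorem hasMellin_of_hasSum_gaussian (hp : ∀ i, 0 < p i) (hs : 0 < s.re)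
    (hF : ∀ t ∈ Ioi 0, HasSum (fun i ↦ a i * rexp (-p i * t ^ 2)) (F t))
    (hsum : Summable fun i ↦ ‖a i‖ / p i ^ (s.re / 2)) :
    HasMellin F s (Complex.Gamma (s / 2) / 2 * ∑' i, a i / (p i : ℂ) ^ (s / 2)) := by
  refine ⟨mellinConvergent_of_hasSum_gaussian hp hs hF hsum, ?_⟩
  have hsqrt : ∀ t ∈ Ioi (0 : ℝ),
      HasSum (fun i ↦ a i * rexp (-p i * t)) (F (t ^ (1 / 2 : ℝ))) := fun t ht ↦ by
    have hsq : (t ^ (1 / 2 : ℝ)) ^ 2 = t := by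
      rw [← Real.sqrt_eq_rpow, Real.sq_sqrt (le_of_lt ht)]
    simpa only [hsq] using hF _ (rpow_pos_of_pos ht (1 / 2))
  have hcomp : mellin (fun t ↦ F (t ^ (1 / 2 : ℝ))) (s / 2) = 2 * mellin F s := by
    rw [mellin_comp_rpow, abs_of_pos (by norm_num), one_div, inv_inv, ofReal_inv, ofReal_ofNat,
      div_inv_eq_mul, div_mul_cancel₀ _ two_ne_zero, real_smul, ofReal_ofNat]
  have hmellin := hasSum_mellin (s := s / 2) (fun i ↦ .inr (hp i)) (by simpa using hs) hsqrt
    (by simpa using hsum)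
  rw [← mul_div_cancel_left₀ (mellin F s) two_ne_zero, ← hcomp, ← hmellin.tsum_eq,
    div_mul_eq_mul_div, ← tsum_mul_left]
  simp only [mul_div_assoc]

end Mellin

section Theta

variable {s : ℂ}

/-- The exponent `π k²` of the `k`-th term of `θ⁰`, with `k = n + 1` as in `theta0`. -/
noncomputable def thetaFreq (n : ℕ) : ℝ := π * ((n : ℝ) + 1) ^ 2

theorem thetaFreq_pos (n : ℕ) : 0 < thetaFreq n := by
  unfold thetaFreq
  positivity

theorem thetaFreq_cpow (n : ℕ) (z : ℂ) :
    (thetaFreq n : ℂ) ^ z = (π : ℂ) ^ z * (n + 1 : ℂ) ^ (2 * z) := by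
  have hsq : ((n + 1 : ℂ) ^ 2) ^ z = (n + 1 : ℂ) ^ (2 * z) := by
    exact_mod_cast (natCast_cpow_natCast_mul (n + 1) 2 z).symm
  rw [thetaFreq, ofReal_mul, mul_cpow_ofReal_nonneg pi_pos.le (by positivity), ← hsq]
  push_cast
  rfl

theorem summable_one_div_thetaFreq_rpow {r : ℝ} (hr : 1 / 2 < r) :
    Summable fun n ↦ 1 / thetaFreq n ^ r := by
  have h := ((summable_one_div_nat_add_rpow 1 (2 * r)).2 (by linarith)).mul_left (1 / π ^ r)
  refine h.congr fun n ↦ ?_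
  have hn : (0 : ℝ) < n + 1 := by positivity
  rw [thetaFreq, mul_rpow pi_pos.le (by positivity), ← rpow_natCast_mul hn.le, abs_of_pos hn,
    Nat.cast_ofNat, one_div_mul_one_div]

theorem summable_thetaFreq_inv : Summable fun n ↦ (thetaFreq n)⁻¹ := by
  simpa using summable_one_div_thetaFreq_rpow (r := 1) (by norm_num)

theorem hasSum_theta0 {t : ℝ} (ht : 0 < t) :
    HasSum (fun n ↦ 2 * rexp (-thetaFreq n * t ^ 2)) (theta0 t) := by
  have hgeom : Summable fun n : ℕ ↦ rexp (n * (-(π * t ^ 2))) :=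
    summable_exp_nat_mul_iff.2 (neg_lt_zero.2 (by positivity))
  have hsum : Summable fun n ↦ rexp (-thetaFreq n * t ^ 2) := by
    refine hgeom.of_nonneg_of_le (fun n ↦ exp_nonneg _) fun n ↦ exp_le_exp.2 ?_
    have hn : (n : ℝ) ≤ ((n : ℝ) + 1) ^ 2 := by nlinarith [n.cast_nonneg (α := ℝ)]
    have := mul_le_mul_of_nonneg_right hn (by positivity : 0 ≤ π * t ^ 2)
    rw [thetaFreq]
    linarith
  simpa only [theta0, thetaFreq, neg_mul] using hsum.hasSum.mul_left 2

theorem theta0_nonneg (t : ℝ) : 0 ≤ theta0 t :=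
  mul_nonneg zero_le_two (tsum_nonneg fun _ ↦ exp_nonneg _)

theorem measurable_theta0 : Measurable theta0 :=
  (Measurable.tsum fun n ↦ by fun_prop).const_mul 2

/-- The incomplete moment `∫_x^∞ θ⁰(t) t dt`, the inner integral left after exchanging the order
of integration in `ξ(s, 2)`. -/
noncomputable def thetaTail (x : ℝ) : ℝ := ∫ t in Ioi x, theta0 t * t

theorem integral_norm_theta0_mul {x : ℝ} (hx : 0 ≤ x) :
    ∫ y in Ioi x, ‖(theta0 y * y : ℂ)‖ = thetaTail x :=
  setIntegral_congr_fun measurableSet_Ioi fun y hy ↦ by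
    rw [← ofReal_mul, Complex.norm_real,
      Real.norm_of_nonneg (mul_nonneg (theta0_nonneg y) (hx.trans (le_of_lt hy)))]

theorem thetaTail_nonneg {x : ℝ} (hx : 0 ≤ x) : 0 ≤ thetaTail x := by
  rw [← integral_norm_theta0_mul hx]
  exact integral_nonneg fun _ ↦ norm_nonneg _

theorem hasSum_thetaTail {x : ℝ} (hx : 0 ≤ x) :
    HasSum (fun n ↦ (thetaFreq n)⁻¹ * rexp (-thetaFreq n * x ^ 2)) (thetaTail x) := by
  let F : ℕ → ℝ → ℝ := fun n t ↦ 2 * (t * rexp (-thetaFreq n * t ^ 2))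
  have hF_int (n : ℕ) : IntegrableOn (F n) (Ioi x) :=
    ((integrable_mul_exp_neg_mul_sq (thetaFreq_pos n)).const_mul 2).integrableOn
  have hF_val (n : ℕ) :
      ∫ t in Ioi x, F n t = (thetaFreq n)⁻¹ * rexp (-thetaFreq n * x ^ 2) := by
    rw [integral_const_mul, integral_Ioi_mul_exp_neg_mul_sq (thetaFreq_pos n)]
    ring
  have hF_norm (n : ℕ) : ∫ t in Ioi x, ‖F n t‖ = ∫ t in Ioi x, F n t :=
    setIntegral_congr_fun measurableSet_Ioi fun t ht ↦ by
      have : 0 < t := hx.trans_lt ht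
      exact Real.norm_of_nonneg (by positivity)
  have hF_sum : Summable fun n ↦ ∫ t in Ioi x, ‖F n t‖ := by
    simp only [hF_norm, hF_val]
    refine summable_thetaFreq_inv.of_nonneg_of_le (fun n ↦ ?_) fun n ↦ ?_
    all_goals have hn := thetaFreq_pos n
    · positivity
    · refine mul_le_of_le_one_right (by positivity) (exp_le_one_iff.2 ?_)
      rw [neg_mul, neg_nonpos]
      positivity
  have hF_tsum : ∫ t in Ioi x, ∑' n, F n t = thetaTail x :=
    setIntegral_congr_fun measurableSet_Ioi fun t ht ↦
      (((hasSum_theta0 (hx.trans_lt ht)).mul_right t).congr_fun fun n ↦ by ring).tsum_eq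
  simpa only [hF_val, hF_tsum] using hasSum_integral_of_summable_integral_norm hF_int hF_sum

theorem hasMellin_theta0 (hs : 1 < s.re) :
    HasMellin (fun t ↦ (theta0 t : ℂ)) s (Gammaℝ s * riemannZeta s) := by
  have hsum : Summable fun n ↦ ‖(2 : ℂ)‖ / thetaFreq n ^ (s.re / 2) := by
    simpa only [mul_one_div] using
      (summable_one_div_thetaFreq_rpow (r := s.re / 2) (by linarith)).mul_left ‖(2 : ℂ)‖
  have hθ := hasMellin_of_hasSum_gaussian (F := fun t ↦ (theta0 t : ℂ)) thetaFreq_pos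
    (by linarith : 0 < s.re) (fun t ht ↦ by exact_mod_cast hasSum_theta0 ht) hsum
  refine ⟨hθ.1, hθ.2.trans ?_⟩
  rw [zeta_eq_tsum_one_div_nat_add_one_cpow hs, ← tsum_mul_left, ← tsum_mul_left]
  refine tsum_congr fun n ↦ ?_
  rw [thetaFreq_cpow, Gammaℝ_def, mul_div_cancel₀ s two_ne_zero, neg_div, cpow_neg]
  field_simp

theorem hasMellin_thetaTail (hs : 0 < s.re) :
    HasMellin (fun t ↦ (thetaTail t : ℂ)) s (Gammaℝ s / (2 * π) * riemannZeta (s + 2)) := by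
  have hsum : Summable fun n ↦ ‖(thetaFreq n : ℂ)⁻¹‖ / thetaFreq n ^ (s.re / 2) := by
    refine (summable_one_div_thetaFreq_rpow (r := s.re / 2 + 1) (by linarith)).congr fun n ↦ ?_
    have hn := thetaFreq_pos n
    rw [norm_inv, Complex.norm_real, Real.norm_of_nonneg hn.le, rpow_add_one hn.ne']
    field_simp
  have hτ := hasMellin_of_hasSum_gaussian (F := fun t ↦ (thetaTail t : ℂ)) thetaFreq_pos hs
    (fun t ht ↦ by exact_mod_cast hasSum_thetaTail (le_of_lt ht)) hsum
  refine ⟨hτ.1, hτ.2.trans ?_⟩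
  rw [zeta_eq_tsum_one_div_nat_add_one_cpow (by simpa using by linarith), ← tsum_mul_left,
    ← tsum_mul_left]
  refine tsum_congr fun n ↦ ?_
  rw [thetaFreq_cpow, Gammaℝ_def, mul_div_cancel₀ s two_ne_zero, neg_div, cpow_neg, thetaFreq,
    cpow_add _ _ n.cast_add_one_ne_zero]
  push_cast
  rw [cpow_ofNat]
  field_simp

theorem hasSum_theta0_mul_thetaTail {t : ℝ} (ht : 0 < t) :
    HasSum (fun p : ℕ × ℕ ↦ 2 * (thetaFreq p.2)⁻¹ *
      rexp (-(thetaFreq p.1 + thetaFreq p.2) * t ^ 2)) (theta0 t * thetaTail t) := by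
  have hθ := hasSum_theta0 ht
  have hτ := hasSum_thetaTail ht.le
  have hsum := hθ.summable.mul_of_nonneg hτ.summable (fun n ↦ by positivity)
    (fun n ↦ mul_nonneg (inv_nonneg.2 (thetaFreq_pos n).le) (exp_nonneg _))
  refine (hθ.mul hτ hsum).congr_fun fun p ↦ ?_
  rw [neg_add, add_mul, Real.exp_add]
  ring

theorem summable_thetaFreq_inv_div_add_rpow {r : ℝ} (hr : 1 / 2 < r) :
    Summable fun p : ℕ × ℕ ↦ (thetaFreq p.2)⁻¹ / (thetaFreq p.1 + thetaFreq p.2) ^ r := by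
  have hfst := summable_one_div_thetaFreq_rpow hr
  have hprod := hfst.mul_of_nonneg summable_thetaFreq_inv
    (fun n ↦ one_div_nonneg.2 (rpow_nonneg (thetaFreq_pos n).le _))
    (fun n ↦ inv_nonneg.2 (thetaFreq_pos n).le)
  refine hprod.of_nonneg_of_le (fun p ↦ ?_) fun p ↦ ?_
  all_goals
    have h₁ := thetaFreq_pos p.1
    have h₂ := thetaFreq_pos p.2
  · positivity
  · rw [div_eq_mul_one_div, mul_comm]
    gcongr
    exact le_add_of_nonneg_right h₂.le

theorem hasMellin_theta0_mul_thetaTail (hs : 1 < s.re) :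
    HasMellin (fun t ↦ (theta0 t * thetaTail t : ℂ)) s (Gammaℝ s / π *
      ∑' p : ℕ × ℕ,
        1 / (((p.1 + 1 : ℂ) ^ 2 + (p.2 + 1 : ℂ) ^ 2) ^ (s / 2) * (p.2 + 1 : ℂ) ^ 2)) := by
  have hpos (p : ℕ × ℕ) := add_pos (thetaFreq_pos p.1) (thetaFreq_pos p.2)
  have hsum : Summable fun p : ℕ × ℕ ↦ ‖2 * (thetaFreq p.2 : ℂ)⁻¹‖ /
      (thetaFreq p.1 + thetaFreq p.2) ^ (s.re / 2) := by
    refine ((summable_thetaFreq_inv_div_add_rpow (r := s.re / 2) (by linarith)).mul_left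
      2).congr fun p ↦ ?_
    rw [norm_mul, norm_inv, Complex.norm_ofNat, Complex.norm_real,
      Real.norm_of_nonneg (thetaFreq_pos p.2).le, mul_div_assoc]
  have hθτ := hasMellin_of_hasSum_gaussian (F := fun t ↦ (theta0 t * thetaTail t : ℂ)) hpos
    (by linarith : 0 < s.re) (fun t ht ↦ by exact_mod_cast hasSum_theta0_mul_thetaTail ht) hsum
  refine ⟨hθτ.1, hθτ.2.trans ?_⟩
  rw [← tsum_mul_left, ← tsum_mul_left]
  refine tsum_congr fun p ↦ ?_
  have hcpow : ((thetaFreq p.1 + thetaFreq p.2 : ℝ) : ℂ) ^ (s / 2) =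
      (π : ℂ) ^ (s / 2) * ((p.1 + 1 : ℂ) ^ 2 + (p.2 + 1 : ℂ) ^ 2) ^ (s / 2) := by
    rw [thetaFreq, thetaFreq, ← mul_add, ofReal_mul,
      mul_cpow_ofReal_nonneg pi_pos.le (by positivity)]
    push_cast
    rfl
  rw [hcpow, Gammaℝ_def, neg_div, cpow_neg, thetaFreq]
  push_cast
  field_simp

theorem hasMellin_thetaFull_mul_thetaTail (hs : 1 < s.re) :
    HasMellin (fun t ↦ (thetaFull t * thetaTail t : ℂ)) s
      (Gammaℝ s / (2 * π) * riemannZeta (s + 2) + Gammaℝ s / π *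
        ∑' p : ℕ × ℕ,
          1 / (((p.1 + 1 : ℂ) ^ 2 + (p.2 + 1 : ℂ) ^ 2) ^ (s / 2) * (p.2 + 1 : ℂ) ^ 2)) := by
  have hτ := hasMellin_thetaTail (by linarith : 0 < s.re)
  have hθτ := hasMellin_theta0_mul_thetaTail hs
  rw [← hτ.2, ← hθτ.2]
  convert hasMellin_add hτ.1 hθτ.1 using 2 with t
  rw [thetaFull, ofReal_add, ofReal_one]
  ring

end Theta

section DoubleXi

variable {s : ℂ}

theorem measurable_thetaFull_mul_cpow (s : ℂ) :
    Measurable fun x : ℝ ↦ (thetaFull x : ℂ) * (x : ℂ) ^ (s - 1) := by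
  have hfull : Measurable thetaFull := measurable_theta0.const_add 1
  fun_prop

theorem integrableOn_theta0_mul : IntegrableOn (fun y : ℝ ↦ (theta0 y * y : ℂ)) (Ioi 0) := by
  refine (hasMellin_theta0 (s := 2) (by norm_num)).1.congr_fun (fun y _ ↦ ?_) measurableSet_Ioi
  norm_num [mul_comm]

theorem integral_thetaFull_cpow_mul_theta0 (hs : 1 < s.re) :
    ∫ y in Ioi (0 : ℝ), (∫ x in Ioc (0 : ℝ) y, (thetaFull x : ℂ) * (x : ℂ) ^ (s - 1)) *
        (theta0 y * y) =
      mellin (fun x ↦ (thetaFull x * thetaTail x : ℂ)) s := by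
  have hprod : IntegrableOn (fun x : ℝ ↦ ‖(thetaFull x : ℂ) * (x : ℂ) ^ (s - 1)‖ *
      ∫ y in Ioi x, ‖(theta0 y * y : ℂ)‖) (Ioi 0) := by
    refine IntegrableOn.congr_fun (hasMellin_thetaFull_mul_thetaTail hs).1.norm (fun x hx ↦ ?_)
      measurableSet_Ioi
    have hx₀ : 0 ≤ x := le_of_lt hx
    simp only [integral_norm_theta0_mul hx₀]
    rw [smul_eq_mul, norm_mul, norm_mul, norm_mul, Complex.norm_real (thetaTail x),
      Real.norm_of_nonneg (thetaTail_nonneg hx₀)]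
    ring
  rw [integral_Ioi_integral_Ioc_mul_swap (measurable_thetaFull_mul_cpow s).aestronglyMeasurable
    integrableOn_theta0_mul hprod]
  refine setIntegral_congr_fun measurableSet_Ioi fun x _ ↦ ?_
  have htail : ∫ y in Ioi x, (theta0 y * y : ℂ) = thetaTail x := by
    simp only [← ofReal_mul]
    exact integral_ofReal
  simp only [htail, smul_eq_mul]
  ring

theorem integral_cpow_mul_theta0 {w : ℂ} (hw : 0 < w.re) :
    ∫ y in Ioi (0 : ℝ), (∫ x in Ioc (0 : ℝ) y, (x : ℂ) ^ (w - 1)) *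
        (theta0 y * (y : ℂ) ^ (s - 1)) =
      mellin (fun y ↦ (theta0 y : ℂ)) (s + w) / w := by
  have hw₀ : w ≠ 0 := fun h ↦ by simp [h] at hw
  have hinner {y : ℝ} (hy : 0 < y) : ∫ x in Ioc (0 : ℝ) y, (x : ℂ) ^ (w - 1) = (y : ℂ) ^ w / w := by
    rw [← intervalIntegral.integral_of_le hy.le, integral_cpow (.inl (by simpa using hw)),
      sub_add_cancel, ofReal_zero, zero_cpow hw₀, sub_zero]
  rw [← mellin_cpow_smul, ← mellin_div_const]
  refine setIntegral_congr_fun measurableSet_Ioi fun y hy ↦ ?_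
  simp only [hinner hy, smul_eq_mul]
  ring

theorem doubleXi_two_right (hs : 1 < s.re) :
    doubleXi s 2 = mellin (fun x ↦ (thetaFull x * thetaTail x : ℂ)) s -
      mellin (fun y ↦ (theta0 y : ℂ)) (s + 2) / 2 := by
  rw [doubleXi, integral_cpow_mul_theta0 (by norm_num), ← integral_thetaFull_cpow_mul_theta0 hs]
  norm_num

theorem double_xi_two_ell_two_general (hs : 1 < s.re) :
    (∑' p : ℕ × ℕ, 1 / (((p.1 + 1 : ℂ) ^ 2 + (p.2 + 1 : ℂ) ^ 2) ^ (s / 2) * (p.2 + 1 : ℂ) ^ 2)) +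
        (1 - s / 2) / 2 * ∑' m : ℕ, 1 / (m + 1 : ℂ) ^ (s + 2) =
      (π : ℂ) ^ (s / 2 + 1) / Complex.Gamma (s / 2) * doubleXi s 2 := by
  have hs₂ : 1 < (s + 2).re := by simpa using by linarith
  have hs₀ : s ≠ 0 := fun h ↦ by norm_num [h] at hs
  have hΓ : Complex.Gamma (s / 2) ≠ 0 := Gamma_ne_zero_of_re_pos (by simpa using by linarith)
  have hπ : (π : ℂ) ≠ 0 := ofReal_ne_zero.2 pi_ne_zero
  have hπs : (π : ℂ) ^ (s / 2) ≠ 0 := by simp [cpow_eq_zero_iff, hπ]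
  rw [doubleXi_two_right hs, (hasMellin_thetaFull_mul_thetaTail hs).2, (hasMellin_theta0 hs₂).2,
    Gammaℝ_add_two hs₀, ← zeta_eq_tsum_one_div_nat_add_one_cpow hs₂, Gammaℝ_def, neg_div, cpow_neg,
    cpow_add _ _ hπ, cpow_one]
  field_simp
  ring

end DoubleXi

/-- For every `ℓ ≥ 1`:
`∑_{m,n≥1} (m²+n²)^{-ℓ} n^{-2} + ((1-ℓ)/2) ∑_{m≥1} m^{-(2ℓ+2)} = (π^{ℓ+1}/(ℓ-1)!) ξ(2ℓ,2)`. -/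
theorem double_xi_two_ell_two (ℓ : ℕ) (hℓ : 1 ≤ ℓ) :
    ((∑' p : ℕ × ℕ,
        1 / ((((p.1 + 1 : ℝ) ^ 2 + (p.2 + 1 : ℝ) ^ 2) ^ ℓ) * ((p.2 + 1 : ℝ) ^ 2)) : ℝ) : ℂ) +
      (((1 - (ℓ : ℝ)) / 2) * ∑' m : ℕ, 1 / ((m + 1 : ℝ) ^ (2 * ℓ + 2)) : ℝ) =
      ((π : ℂ) ^ (ℓ + 1) / (Nat.factorial (ℓ - 1) : ℂ)) * doubleXi (2 * ℓ) 2 := by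
  have hs : 1 < (2 * ℓ : ℂ).re := by
    have : (1 : ℝ) ≤ ℓ := Nat.one_le_cast.2 hℓ
    simpa using by linarith
  have hΓ : Complex.Gamma ℓ = (ℓ - 1).factorial := by
    rw [← Complex.Gamma_nat_eq_factorial, Nat.cast_sub hℓ, Nat.cast_one, sub_add_cancel]
  have hξ := double_xi_two_ell_two_general hs
  have hexp : (2 * ℓ + 2 : ℂ) = (2 * ℓ + 2 : ℕ) := by push_cast; rfl
  rw [mul_div_cancel_left₀ _ two_ne_zero, hΓ, hexp, ← Nat.cast_succ] at hξ
  simpa only [cpow_natCast, ofReal_tsum, ofReal_add, ofReal_sub, ofReal_mul, ofReal_div,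
    ofReal_pow, ofReal_natCast, ofReal_one, ofReal_ofNat] using hξ
end
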